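/- (Bound on the controlled-ODE solution.) Let μ₁,…,μ_d be finite signed measures on (0, T], let υ = Σ_{i=1}^d |μ_i| be the sum of their total-variation measures, and set B_υ = υ((0,T]). Let V_i : (0,T] × ℝ^ℓ → ℝ^ℓ be measurable functions satisfying ‖V_i(s, y)‖ ≤ B_V(1 + ‖y‖) for all i, s, y. Suppose X : [0, T] → ℝ^ℓ is a càdlàg (right-continuous with left limits) function satisfying X(t) = x + Σ_{i=1}^d ∫_{(0,t]} V_i(s, X(s⁻)) dμ_i(s) for all 0 ≤ t ≤ T, where X(s⁻) denotes the left limit. Then for all 0 ≤ t ≤ T: ‖X(t)‖ ≤ (‖x‖ + B_V B_υ)·exp(B_V B_υ). -/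

import Mathlib

open MeasureTheory
open scoped BigOperators

/-- Euclidean norm of a vector in ℝ^ℓ (Frobenius-type norm). -/
noncomputable def vnorm {ℓ : ℕ} (v : Fin ℓ → ℝ) : ℝ := Real.sqrt (∑ i, (v i) ^ 2)

/-- Integral of a vector-valued function against a finite signed measure, defined via the
Jordan decomposition. -/
noncomputable def signedIntegral {E : Type*} [NormedAddCommGroup E] [NormedSpace ℝ E]
    [CompleteSpace E] (μ : SignedMeasure ℝ) (s : Set ℝ) (f : ℝ → E) : E :=
  (∫ t in s, f t ∂μ.toJordanDecomposition.posPart) -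
    ∫ t in s, f t ∂μ.toJordanDecomposition.negPart

theorem gron_eps (T : ℝ) (υ ν : Measure ℝ) [IsFiniteMeasure υ] [IsFiniteMeasure ν]
    (A B ε : ℝ) (hA : 0 ≤ A) (hB : 0 ≤ B) (hε : 0 < ε)
    (h : ∀ t ∈ Set.Ioc (0 : ℝ) T, ∀ S ⊆ Set.Ioc 0 t, MeasurableSet S →
      ν.real S ≤ B * (A + ν.real (Set.Ioo 0 t)) * υ.real S) :
    ∀ t ∈ Set.Icc (0 : ℝ) T,
      A + ν.real (Set.Ioc 0 t) ≤ A * Real.exp ((1 + ε) * B * υ.real (Set.Ioc 0 t)) := by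
  by_contra hcon
  push Not at hcon
  set bad : Set ℝ := {t | t ∈ Set.Icc (0 : ℝ) T ∧
    A * Real.exp ((1 + ε) * B * υ.real (Set.Ioc 0 t)) < A + ν.real (Set.Ioc 0 t)} with hbad
  have hne : bad.Nonempty := by
    obtain ⟨t, ht, h'⟩ := hcon
    exact ⟨t, ht, h'⟩
  have hbdd : BddBelow bad := ⟨0, fun t ht => ht.1.1⟩
  set c := sInf bad with hc
  have hc0 : 0 ≤ c := le_csInf hne fun t ht => ht.1.1
  have hcT : c ≤ T := by
    obtain ⟨t, ht⟩ := hne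
    exact (csInf_le hbdd ht).trans ht.1.2
  have hlt : ∀ s, 0 ≤ s → s < c →
      A + ν.real (Set.Ioc 0 s) ≤ A * Real.exp ((1 + ε) * B * υ.real (Set.Ioc 0 s)) := by
    intro s hs hsc
    by_contra h'
    push Not at h'
    exact absurd (csInf_le hbdd (show s ∈ bad from ⟨⟨hs, hsc.le.trans hcT⟩, h'⟩)) (not_le.2 hsc)
  have hEB : 0 ≤ (1 + ε) * B := by positivity
  -- at c
  have hatc : A + ν.real (Set.Ioc 0 c) ≤ A * Real.exp ((1 + ε) * B * υ.real (Set.Ioc 0 c)) := by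
    rcases hc0.eq_or_lt with h0 | h0
    · rw [← h0]; simp
    have hleft : A + ν.real (Set.Ioo 0 c)
        ≤ A * Real.exp ((1 + ε) * B * υ.real (Set.Ioo 0 c)) := by
      obtain ⟨u, hu1, hu2, hu3⟩ := exists_seq_strictMono_tendsto' h0
      have hU : Set.Ioo 0 c = ⋃ n, Set.Ioc 0 (u n) := by
        ext r
        simp only [Set.mem_Ioo, Set.mem_iUnion, Set.mem_Ioc]
        constructor
        · rintro ⟨h1, h2⟩
          obtain ⟨n, hn⟩ := (hu3.eventually (lt_mem_nhds h2)).exists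
          exact ⟨n, h1, hn.le⟩
        · rintro ⟨n, h1, h2⟩
          exact ⟨h1, h2.trans_lt (hu2 n).2⟩
      have hmono : Monotone fun n => Set.Ioc 0 (u n) := fun m n hmn =>
        Set.Ioc_subset_Ioc_right (hu1.monotone hmn)
      have htend : Filter.Tendsto (fun n => ν.real (Set.Ioc 0 (u n))) Filter.atTop
          (nhds (ν.real (Set.Ioo 0 c))) := by
        rw [hU]
        exact (ENNReal.tendsto_toReal (measure_ne_top _ _)).comp
          (tendsto_measure_iUnion_atTop hmono)
      refine le_of_tendsto (htend.const_add A) (Filter.Eventually.of_forall fun n => ?_)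
      refine (hlt (u n) (hu2 n).1.le (hu2 n).2).trans ?_
      have : υ.real (Set.Ioc 0 (u n)) ≤ υ.real (Set.Ioo 0 c) :=
        measureReal_mono (by rw [hU]; exact Set.subset_iUnion (fun n => Set.Ioc 0 (u n)) n)
      gcongr
    have hsplit : ∀ m : Measure ℝ, IsFiniteMeasure m →
        m.real (Set.Ioc 0 c) = m.real (Set.Ioo 0 c) + m.real {c} := by
      intro m _
      rw [← measureReal_union (by simp) (measurableSet_singleton c), Set.Ioo_union_right h0]
    rw [hsplit ν inferInstance, hsplit υ inferInstance]
    have hj := h c ⟨h0, hcT⟩ {c} (by simpa using h0) (measurableSet_singleton c)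
    have hd : 0 ≤ υ.real {c} := measureReal_nonneg
    set G := A + ν.real (Set.Ioo 0 c) with hG
    have hG0 : 0 ≤ G := add_nonneg hA measureReal_nonneg
    set δ := υ.real {c}
    have h1 : 1 + B * δ ≤ Real.exp ((1 + ε) * B * δ) := by
      have := Real.add_one_le_exp ((1 + ε) * B * δ)
      have : 0 ≤ ε * B * δ := by positivity
      linarith
    calc A + (ν.real (Set.Ioo 0 c) + ν.real {c}) ≤ G * (1 + B * δ) := by
          rw [hG] at *; linarith
      _ ≤ (A * Real.exp ((1 + ε) * B * υ.real (Set.Ioo 0 c))) * Real.exp ((1 + ε) * B * δ) := by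
          gcongr
      _ = _ := by rw [mul_assoc, ← Real.exp_add, mul_add]
  -- right of c
  have hsmall : ∀ᶠ t in nhdsWithin c (Set.Ioi c),
      (1 + ε) * (B * υ.real (Set.Ioc c t)) < ε := by
    have h1 : Filter.Tendsto (fun t => υ (Set.Ioc c t)) (nhdsWithin c (Set.Ioi c)) (nhds 0) := by
      have := tendsto_measure_biInter_gt (μ := υ) (s := fun t => Set.Ioc c t) (a := c)
        (fun r _ => measurableSet_Ioc.nullMeasurableSet)
        (fun i j _ hij => Set.Ioc_subset_Ioc_right hij) ⟨c + 1, by simp, measure_ne_top _ _⟩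
      have he : (⋂ r, ⋂ (_ : r > c), Set.Ioc c r) = ∅ := by
        ext y
        simp only [Set.mem_iInter, Set.mem_Ioc, Set.mem_empty_iff_false, iff_false]
        intro hy
        have h2 := (hy (c + 1) (by simp)).1
        have h3 := (hy ((c + y) / 2) (by simp; linarith)).2
        linarith
      rw [he, measure_empty] at this
      exact this
    have h2 : Filter.Tendsto (fun t => υ.real (Set.Ioc c t)) (nhdsWithin c (Set.Ioi c))
        (nhds 0) := (ENNReal.tendsto_toReal ENNReal.zero_ne_top).comp h1
    have h3 := (h2.const_mul B).const_mul (1 + ε)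
    simp only [mul_zero] at h3
    exact h3.eventually (gt_mem_nhds hε)
  obtain ⟨b, hb, hb'⟩ := (mem_nhdsGT_iff_exists_Ioo_subset).1 hsmall
  obtain ⟨t, ht, htb⟩ := exists_lt_of_csInf_lt hne (show sInf bad < b from hb)
  have hct : c ≤ t := csInf_le hbdd ht
  rcases hct.eq_or_lt with he | hct
  · rw [← he] at ht
    exact absurd hatc (not_le.2 ht.2)
  have hs : (1 + ε) * (B * υ.real (Set.Ioc c t)) < ε := hb' ⟨hct, htb⟩
  have ht0 : 0 < t := hc0.trans_lt hct
  have hj := h t ⟨ht0, ht.1.2⟩ (Set.Ioc c t) (Set.Ioc_subset_Ioc_left hc0) measurableSet_Ioc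
  have hsplit : ∀ m : Measure ℝ, IsFiniteMeasure m →
      m.real (Set.Ioc 0 t) = m.real (Set.Ioc 0 c) + m.real (Set.Ioc c t) := by
    intro m _
    rw [← measureReal_union (Set.Ioc_disjoint_Ioc_of_le le_rfl) measurableSet_Ioc,
      Set.Ioc_union_Ioc_eq_Ioc hc0 hct.le]
  have hbadt := ht.2
  have hmono : ν.real (Set.Ioo 0 t) ≤ ν.real (Set.Ioc 0 t) :=
    measureReal_mono Set.Ioo_subset_Ioc_self
  rw [hsplit υ inferInstance, mul_add, Real.exp_add] at hbadt
  have hs1 := hsplit ν inferInstance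
  have hd : 0 ≤ υ.real (Set.Ioc c t) := measureReal_nonneg
  set δ := υ.real (Set.Ioc c t)
  set G := A + ν.real (Set.Ioc 0 t) with hG
  have hG0 : 0 ≤ G := add_nonneg hA measureReal_nonneg
  set E := Real.exp ((1 + ε) * B * δ) with hE
  have hE1 : (1 + ε) * B * δ + 1 ≤ E := Real.add_one_le_exp _
  set a := B * δ with ha
  have ha0 : 0 ≤ a := by positivity
  have hstep : G * (1 - a) ≤ A + ν.real (Set.Ioc 0 c) := by
    have : B * (A + ν.real (Set.Ioo 0 t)) * δ ≤ B * G * δ := by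
      gcongr; linarith
    have : B * G * δ = G * a := by rw [ha]; ring
    linarith
  have ha1 : a < 1 := by nlinarith
  have hkey : 1 ≤ (1 - a) * E := by
    have h1 : (1 - a) * ((1 + ε) * a + 1) ≤ (1 - a) * E := by
      apply mul_le_mul_of_nonneg_left _ (by linarith)
      rw [ha]; linarith
    nlinarith
  have hfin : G ≤ A * Real.exp ((1 + ε) * B * υ.real (Set.Ioc 0 c)) * E :=
    calc G = G * 1 := by ring
      _ ≤ G * ((1 - a) * E) := by gcongr
      _ = (G * (1 - a)) * E := by ring
      _ ≤ _ := by
        apply mul_le_mul_of_nonneg_right (hstep.trans hatc) (Real.exp_pos _).le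
  linarith

theorem gron (T : ℝ) (υ ν : Measure ℝ) [IsFiniteMeasure υ] [IsFiniteMeasure ν]
    (A B : ℝ) (hA : 0 ≤ A) (hB : 0 ≤ B)
    (h : ∀ t ∈ Set.Ioc (0 : ℝ) T, ∀ S ⊆ Set.Ioc 0 t, MeasurableSet S →
      ν.real S ≤ B * (A + ν.real (Set.Ioo 0 t)) * υ.real S) :
    ∀ t ∈ Set.Icc (0 : ℝ) T,
      A + ν.real (Set.Ioc 0 t) ≤ A * Real.exp (B * υ.real (Set.Ioc 0 t)) := by
  intro t ht
  have hcont : Continuous fun ε : ℝ => A * Real.exp ((1 + ε) * B * υ.real (Set.Ioc 0 t)) := by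
    fun_prop
  have h1 : Filter.Tendsto (fun ε : ℝ => A * Real.exp ((1 + ε) * B * υ.real (Set.Ioc 0 t)))
      (nhdsWithin 0 (Set.Ioi 0)) (nhds (A * Real.exp (B * υ.real (Set.Ioc 0 t)))) := by
    have := (hcont.tendsto 0).mono_left (nhdsWithin_le_nhds (s := Set.Ioi 0))
    simpa using this
  refine ge_of_tendsto h1 ?_
  filter_upwards [self_mem_nhdsWithin] with ε hε
  exact gron_eps T υ ν A B ε hA hB hε h t ht

theorem vnorm_eq {ℓ : ℕ} (v : Fin ℓ → ℝ) :
    vnorm v = ‖(PiLp.continuousLinearEquiv 2 ℝ (fun _ : Fin ℓ => ℝ)).symm v‖ := by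
  rw [EuclideanSpace.norm_eq]
  simp [vnorm]

theorem vnorm_continuous {ℓ : ℕ} : Continuous (vnorm : (Fin ℓ → ℝ) → ℝ) := by
  unfold vnorm
  fun_prop

theorem vnorm_nonneg {ℓ : ℕ} (v : Fin ℓ → ℝ) : 0 ≤ vnorm v := Real.sqrt_nonneg _

theorem vnorm_integral_le {ℓ : ℕ} (m : Measure ℝ) (f : ℝ → Fin ℓ → ℝ) :
    ENNReal.ofReal (vnorm (∫ s, f s ∂m)) ≤ ∫⁻ s, ENNReal.ofReal (vnorm (f s)) ∂m := by
  simp only [vnorm_eq]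
  rw [← ContinuousLinearEquiv.integral_comp_comm]
  simp only [ofReal_norm]
  exact enorm_integral_le_lintegral_enorm _

theorem vnorm_add_le {ℓ : ℕ} (v w : Fin ℓ → ℝ) : vnorm (v + w) ≤ vnorm v + vnorm w := by
  simp only [vnorm_eq, map_add]
  exact norm_add_le _ _

theorem vnorm_sum_le {ℓ d : ℕ} (v : Fin d → Fin ℓ → ℝ) :
    vnorm (∑ i, v i) ≤ ∑ i, vnorm (v i) := by
  simp only [vnorm_eq, map_sum]
  exact norm_sum_le _ _

theorem vnorm_signedIntegral_le {ℓ : ℕ} (m : SignedMeasure ℝ) (S : Set ℝ)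
    (f : ℝ → Fin ℓ → ℝ) :
    ENNReal.ofReal (vnorm (signedIntegral m S f)) ≤
      ∫⁻ s in S, ENNReal.ofReal (vnorm (f s)) ∂m.totalVariation := by
  unfold signedIntegral SignedMeasure.totalVariation
  rw [Measure.restrict_add, lintegral_add_measure]
  refine le_trans ?_ (add_le_add (vnorm_integral_le _ f) (vnorm_integral_le _ f))
  rw [← ENNReal.ofReal_add (vnorm_nonneg _) (vnorm_nonneg _)]
  apply ENNReal.ofReal_le_ofReal
  simp only [vnorm_eq, map_sub]
  exact norm_sub_le _ _

theorem lintegral_vnorm_ne_top {ℓ : ℕ} (m : Measure ℝ) (f : ℝ → Fin ℓ → ℝ)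
    (hf : Integrable f m) : ∫⁻ s, ENNReal.ofReal (vnorm (f s)) ∂m ≠ ⊤ := by
  have h1 := ContinuousLinearMap.integrable_comp
    (PiLp.continuousLinearEquiv 2 ℝ (fun _ : Fin ℓ => ℝ)).symm.toContinuousLinearMap hf
  have h2 := h1.2
  simp only [HasFiniteIntegral] at h2
  simp only [vnorm_eq, ofReal_norm]
  exact h2.ne

/-- bound on the controlled-ODE solution: if the càdlàg function X solves
X(t) = x + Σᵢ ∫_{(0,t]} Vᵢ(s, X(s⁻)) dμᵢ(s) with ‖Vᵢ(s,y)‖ ≤ B_V(1 + ‖y‖), then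
‖X(t)‖ ≤ (‖x‖ + B_V·B_υ)·exp(B_V·B_υ), where B_υ = (Σᵢ|μᵢ|)((0,T]). -/
theorem statement15 {d ℓ : ℕ} (T : ℝ) (hT : 0 < T)
    (μ : Fin d → SignedMeasure ℝ)
    (V : Fin d → ℝ → (Fin ℓ → ℝ) → Fin ℓ → ℝ) (BV : ℝ)
    (x : Fin ℓ → ℝ) (X Xm : ℝ → Fin ℓ → ℝ)
    (Bυ : ℝ) (hBυ : Bυ = ((∑ i, (μ i).totalVariation) (Set.Ioc 0 T)).toReal)
    (hV : ∀ i s y, vnorm (V i s y) ≤ BV * (1 + vnorm y))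
    (hVmeas : ∀ i, Measurable (fun p : ℝ × (Fin ℓ → ℝ) => V i p.1 p.2))
    (hrightcont : ∀ t ∈ Set.Icc (0 : ℝ) T, ContinuousWithinAt X (Set.Ici t) t)
    (hleftlim : ∀ t ∈ Set.Ioc (0 : ℝ) T,
      Filter.Tendsto X (nhdsWithin t (Set.Iio t)) (nhds (Xm t)))
    (hint : ∀ i, IntegrableOn (fun s => V i s (Xm s)) (Set.Ioc 0 T) (μ i).totalVariation)
    (heq : ∀ t ∈ Set.Icc (0 : ℝ) T,
      X t = x + ∑ i, signedIntegral (μ i) (Set.Ioc 0 t) fun s => V i s (Xm s)) :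
    ∀ t ∈ Set.Icc (0 : ℝ) T, vnorm (X t) ≤ (vnorm x + BV * Bυ) * Real.exp (BV * Bυ) := by
  intro t0 ht0
  by_cases hBV : BV < 0
  · have hd : IsEmpty (Fin d) := by
      refine ⟨fun i => ?_⟩
      have h1 := hV i 0 0
      have h2 := vnorm_nonneg (V i 0 0)
      have h3 := vnorm_nonneg (0 : Fin ℓ → ℝ)
      nlinarith
    have hX := heq t0 ht0
    simp at hX hBυ
    simp [hX, hBυ]
  push Not at hBV
  set υ : Measure ℝ := ∑ i, (μ i).totalVariation with hυ
  have hfinTV : ∀ i, IsFiniteMeasure (μ i).totalVariation := fun i => by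
    unfold SignedMeasure.totalVariation; infer_instance
  have hfυ : IsFiniteMeasure υ := by
    rw [hυ]; infer_instance
  set ν : Measure ℝ := ∑ i, ((μ i).totalVariation.restrict (Set.Ioc 0 T)).withDensity
    (fun s => ENNReal.ofReal (vnorm (V i s (Xm s)))) with hν
  have hfν : IsFiniteMeasure ν := by
    have : ∀ i, IsFiniteMeasure (((μ i).totalVariation.restrict (Set.Ioc 0 T)).withDensity
        (fun s => ENNReal.ofReal (vnorm (V i s (Xm s))))) := fun i => by
      apply isFiniteMeasure_withDensity
      exact lintegral_vnorm_ne_top _ _ (hint i)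
    rw [hν]; infer_instance
  have hνS : ∀ S, MeasurableSet S → S ⊆ Set.Ioc 0 T → ν S =
      ∑ i, ∫⁻ s in S, ENNReal.ofReal (vnorm (V i s (Xm s))) ∂(μ i).totalVariation := by
    intro S hS hST
    rw [hν, Measure.finsetSum_apply]
    refine Finset.sum_congr rfl fun i _ => ?_
    rw [withDensity_apply _ hS, Measure.restrict_restrict hS, Set.inter_eq_left.2 hST]
  have hXbd : ∀ t ∈ Set.Icc (0 : ℝ) T, vnorm (X t) ≤ vnorm x + ν.real (Set.Ioc 0 t) := by
    intro t ht
    rw [heq t ht]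
    refine (vnorm_add_le _ _).trans (add_le_add le_rfl ((vnorm_sum_le _).trans ?_))
    rw [Measure.real, ← ENNReal.ofReal_le_iff_le_toReal (measure_ne_top _ _),
      hνS _ measurableSet_Ioc (Set.Ioc_subset_Ioc_right ht.2),
      ENNReal.ofReal_sum_of_nonneg (fun i _ => vnorm_nonneg _)]
    exact Finset.sum_le_sum fun i _ => vnorm_signedIntegral_le _ _ _
  have hXm : ∀ t ∈ Set.Ioc (0 : ℝ) T, vnorm (Xm t) ≤ vnorm x + ν.real (Set.Ioo 0 t) := by
    intro t ht
    refine le_of_tendsto ((vnorm_continuous.tendsto _).comp (hleftlim t ht)) ?_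
    filter_upwards [Ioo_mem_nhdsLT ht.1] with s hs
    refine (hXbd s ⟨hs.1.le, hs.2.le.trans ht.2⟩).trans ?_
    gcongr
    · exact measure_ne_top _ _
    · exact hs.2
  have hG := gron T υ ν (1 + vnorm x) BV (by have := vnorm_nonneg x; linarith) hBV (by
    intro t ht S hS hSm
    have hK : 0 ≤ BV * (1 + vnorm x + ν.real (Set.Ioo 0 t)) := by
      have := vnorm_nonneg x
      positivity
    have hle : ν S ≤ ENNReal.ofReal (BV * (1 + vnorm x + ν.real (Set.Ioo 0 t))) * υ S := by
      rw [hνS S hSm (hS.trans (Set.Ioc_subset_Ioc_right ht.2)), hυ, Measure.finsetSum_apply,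
        Finset.mul_sum]
      refine Finset.sum_le_sum fun i _ => ?_
      rw [← setLIntegral_const]
      refine setLIntegral_mono measurable_const fun s hs => ?_
      apply ENNReal.ofReal_le_ofReal
      refine (hV i s _).trans ?_
      have hs' := hS hs
      have h1 := hXm s ⟨hs'.1, hs'.2.trans ht.2⟩
      have h2 : ν.real (Set.Ioo 0 s) ≤ ν.real (Set.Ioo 0 t) :=
        measureReal_mono (Set.Ioo_subset_Ioo_right hs'.2)
      exact mul_le_mul_of_nonneg_left (by linarith) hBV
    have := ENNReal.toReal_mono (ENNReal.mul_ne_top ENNReal.ofReal_ne_top (measure_ne_top _ _)) hle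
    rwa [ENNReal.toReal_mul, ENNReal.toReal_ofReal hK] at this) t0 ht0
  have hF : υ.real (Set.Ioc 0 t0) ≤ Bυ := by
    rw [hBυ]
    exact measureReal_mono (Set.Ioc_subset_Ioc_right ht0.2)
  have hx := vnorm_nonneg x
  have h1 := hXbd t0 ht0
  have h2 : (1 + vnorm x) * Real.exp (BV * υ.real (Set.Ioc 0 t0)) ≤
      (1 + vnorm x) * Real.exp (BV * Bυ) := by gcongr
  have h3 : (1 - BV * Bυ) * Real.exp (BV * Bυ) ≤ 1 := by
    have h4 := Real.add_one_le_exp (-(BV * Bυ))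
    calc (1 - BV * Bυ) * Real.exp (BV * Bυ) ≤ Real.exp (-(BV * Bυ)) * Real.exp (BV * Bυ) := by
          gcongr; linarith
      _ = 1 := by rw [← Real.exp_add]; simp
  linarith
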